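/- Let b₁, b₂, r ≥ 1 be integers, and let T = CG(b₁,b₂,r) be the crab graph with leaves as boundary. Then the Steklov eigenvalues of T are σ_1 = 0, σ_2 = (b₁+b₂)/(b₁b₂ + r(b₁+b₂)), and σ_k = 1/r for all 3 ≤ k ≤ b₁+b₂. -/

import Mathlib

open scoped BigOperators
open Classical

/-- The Dirichlet energy of a function on a finite graph: `∑_{edges xy} (f x - f y)^2`. -/
noncomputable def dirichletEnergy {V : Type*} [Fintype V] (G : SimpleGraph V) (f : V → ℝ) : ℝ :=
  (∑ x : V, ∑ y : V, if G.Adj x y then (f x - f y) ^ 2 else 0) / 2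

/-- The `k`-th Steklov (Dirichlet-to-Neumann) eigenvalue (1-indexed, in increasing order
with multiplicity) of a finite graph `G` with boundary `B`, via the variational
(Courant–Fischer) characterization. -/
noncomputable def steklovEig {V : Type*} [Fintype V] (G : SimpleGraph V) (B : Finset V)
    (k : ℕ) : ℝ :=
  sInf { t : ℝ | ∃ F : Submodule ℝ (V → ℝ),
    Module.finrank ℝ (F.map (LinearMap.funLeft ℝ ℝ (fun x : {v // v ∈ B} => (x : V)))) = k ∧
    ∀ f ∈ F, dirichletEnergy G f ≤ t * ∑ x ∈ B, (f x) ^ 2 }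

/-- The set of leaves (vertices of degree 1) of a finite graph, as a `Finset`. -/
noncomputable def leavesFinset {V : Type*} [Fintype V] (G : SimpleGraph V) : Finset V :=
  Finset.univ.filter fun v => G.degree v = 1

/-- `σ_{k,max}(b,n)`: the maximum of the `k`-th Steklov eigenvalue over all trees with
`b` leaves (as boundary) and `n` vertices. -/
noncomputable def sigmaMax (k b n : ℕ) : ℝ :=
  sSup { s : ℝ | ∃ G : SimpleGraph (Fin n), G.IsTree ∧ (leavesFinset G).card = b ∧
    s = steklovEig G (leavesFinset G) k }

/-- `σ̃_{2,max}(D,n)`: the maximum of the first nontrivial Steklov eigenvalue over all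
trees with diameter `D` and `n` vertices. -/
noncomputable def sigmaTildeMax (D n : ℕ) : ℝ :=
  sSup { s : ℝ | ∃ G : SimpleGraph (Fin n), G.IsTree ∧ G.diam = D ∧
    s = steklovEig G (leavesFinset G) 2 }

/-- The crab graph `CG(b₁,b₂,r)`: an edge `u₀v₀` (`u₀ = Sum.inr (Sum.inr false)`,
`v₀ = Sum.inr (Sum.inr true)`) with `b₁` paths of length `r` attached at `u₀` and
`b₂` paths of length `r` attached at `v₀`. -/
def crabGraph (b₁ b₂ r : ℕ) :
    SimpleGraph ((Fin b₁ × Fin r) ⊕ (Fin b₂ × Fin r) ⊕ Bool) :=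
  SimpleGraph.fromRel fun x y =>
    match x, y with
    | Sum.inr (Sum.inr false), Sum.inr (Sum.inr true) => True
    | Sum.inr (Sum.inr false), Sum.inl (_, i) => (i : ℕ) = 0
    | Sum.inr (Sum.inr true), Sum.inr (Sum.inl (_, i)) => (i : ℕ) = 0
    | Sum.inl (ℓ, i), Sum.inl (m, j) => ℓ = m ∧ (j : ℕ) = (i : ℕ) + 1
    | Sum.inr (Sum.inl (ℓ, i)), Sum.inr (Sum.inl (m, j)) => ℓ = m ∧ (j : ℕ) = (i : ℕ) + 1
    | _, _ => False
/-- The oriented edge relation of the crab graph. -/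
def crabRel (b₁ b₂ r : ℕ) :
    ((Fin b₁ × Fin r) ⊕ (Fin b₂ × Fin r) ⊕ Bool) →
    ((Fin b₁ × Fin r) ⊕ (Fin b₂ × Fin r) ⊕ Bool) → Prop := fun x y =>
    match x, y with
    | Sum.inr (Sum.inr false), Sum.inr (Sum.inr true) => True
    | Sum.inr (Sum.inr false), Sum.inl (_, i) => (i : ℕ) = 0
    | Sum.inr (Sum.inr true), Sum.inr (Sum.inl (_, i)) => (i : ℕ) = 0
    | Sum.inl (ℓ, i), Sum.inl (m, j) => ℓ = m ∧ (j : ℕ) = (i : ℕ) + 1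
    | Sum.inr (Sum.inl (ℓ, i)), Sum.inr (Sum.inl (m, j)) => ℓ = m ∧ (j : ℕ) = (i : ℕ) + 1
    | _, _ => False

lemma crab_eq (b₁ b₂ r : ℕ) : crabGraph b₁ b₂ r = SimpleGraph.fromRel (crabRel b₁ b₂ r) := rfl

lemma crabRel_asymm (b₁ b₂ r : ℕ) (x y) (h : crabRel b₁ b₂ r x y) : ¬ crabRel b₁ b₂ r y x := by
  rcases x with ⟨l, i⟩ | ⟨l, i⟩ | _ | _ <;> rcases y with ⟨m, j⟩ | ⟨m, j⟩ | _ | _ <;>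
    simp [crabRel] at h ⊢ <;> omega

lemma crab_adj (b₁ b₂ r : ℕ) (x y) :
    (crabGraph b₁ b₂ r).Adj x y ↔ crabRel b₁ b₂ r x y ∨ crabRel b₁ b₂ r y x := by
  rw [crab_eq, SimpleGraph.fromRel_adj]
  constructor
  · exact fun h => h.2
  · intro h
    refine ⟨?_, h⟩
    rintro rfl
    have := crabRel_asymm b₁ b₂ r x x
    tauto

/-- Energy of one leg. -/
noncomputable def legE {r : ℕ} (a : ℝ) (p : Fin r → ℝ) : ℝ :=
  (∑ j : Fin r, if (j : ℕ) = 0 then (a - p j) ^ 2 else 0) +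
    ∑ i : Fin r, ∑ j : Fin r, if (j : ℕ) = (i : ℕ) + 1 then (p i - p j) ^ 2 else 0

lemma energy_eq (b₁ b₂ r : ℕ) (f) :
    dirichletEnergy (crabGraph b₁ b₂ r) f =
      (f (Sum.inr (Sum.inr false)) - f (Sum.inr (Sum.inr true))) ^ 2 +
      ∑ l, legE (f (Sum.inr (Sum.inr false))) (fun i => f (Sum.inl (l, i))) +
      ∑ l, legE (f (Sum.inr (Sum.inr true))) (fun i => f (Sum.inr (Sum.inl (l, i)))) := by
  have h1 : dirichletEnergy (crabGraph b₁ b₂ r) f =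
      ∑ x, ∑ y, if crabRel b₁ b₂ r x y then (f x - f y) ^ 2 else 0 := by
    have : ∀ x y, (if (crabGraph b₁ b₂ r).Adj x y then (f x - f y) ^ 2 else 0) =
        (if crabRel b₁ b₂ r x y then (f x - f y) ^ 2 else 0) +
        (if crabRel b₁ b₂ r y x then (f y - f x) ^ 2 else 0) := by
      intro x y
      have := crabRel_asymm b₁ b₂ r x y
      rw [crab_adj]
      by_cases h : crabRel b₁ b₂ r x y
      · simp [h, this h]
      · by_cases h' : crabRel b₁ b₂ r y x
        · simp [h, h']; ring
        · simp [h, h']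
    unfold dirichletEnergy
    simp only [this, Finset.sum_add_distrib]
    rw [Finset.sum_comm (f := fun x y => if crabRel b₁ b₂ r y x then (f y - f x) ^ 2 else 0)]
    ring
  rw [h1]
  have key : ∀ (b : ℕ) (p : Fin b → Fin r → ℝ),
      (∑ l : Fin b, ∑ i : Fin r, ∑ m : Fin b, ∑ j : Fin r,
        if l = m ∧ (j : ℕ) = (i : ℕ) + 1 then (p l i - p m j) ^ 2 else 0) =
      ∑ l : Fin b, ∑ i : Fin r, ∑ j : Fin r,
        if (j : ℕ) = (i : ℕ) + 1 then (p l i - p l j) ^ 2 else 0 := by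
    intro b p
    refine Finset.sum_congr rfl fun l _ => Finset.sum_congr rfl fun i _ => ?_
    rw [Finset.sum_eq_single l]
    · simp
    · intro m _ hm
      simp [hm.symm]
    · simp
  have k1 := key b₁ (fun l i => f (Sum.inl (l, i)))
  have k2 := key b₂ (fun l i => f (Sum.inr (Sum.inl (l, i))))
  obtain ⟨w, hw⟩ : ∃ w : ((Fin b₁ × Fin r) ⊕ (Fin b₂ × Fin r) ⊕ Bool) →
      ((Fin b₁ × Fin r) ⊕ (Fin b₂ × Fin r) ⊕ Bool) → ℝ,
      w = fun x y => if crabRel b₁ b₂ r x y then (f x - f y) ^ 2 else 0 := ⟨_, rfl⟩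
  have hw' : ∀ x y, (if crabRel b₁ b₂ r x y then (f x - f y) ^ 2 else 0) = w x y := by
    intro x y; rw [hw]
  simp only [hw']
  have w1 : ∀ (l : Fin b₁) (i : Fin r) (m : Fin b₁) (j : Fin r), w (Sum.inl (l, i)) (Sum.inl (m, j)) =
      if l = m ∧ (j : ℕ) = (i : ℕ) + 1 then (f (Sum.inl (l, i)) - f (Sum.inl (m, j))) ^ 2 else 0 := by
    rw [hw]; exact fun _ _ _ _ => if_congr Iff.rfl rfl rfl
  have w2 : ∀ (l : Fin b₁) (i : Fin r) (m : Fin b₂) (j : Fin r), w (Sum.inl (l, i)) (Sum.inr (Sum.inl (m, j))) =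
      0 := by
    rw [hw]; exact fun _ _ _ _ => if_neg fun h => h
  have w3 : ∀ (l : Fin b₁) (i : Fin r), w (Sum.inl (l, i)) (Sum.inr (Sum.inr false)) =
      0 := by
    rw [hw]; exact fun _ _ => if_neg fun h => h
  have w4 : ∀ (l : Fin b₁) (i : Fin r), w (Sum.inl (l, i)) (Sum.inr (Sum.inr true)) =
      0 := by
    rw [hw]; exact fun _ _ => if_neg fun h => h
  have w5 : ∀ (l : Fin b₂) (i : Fin r) (m : Fin b₁) (j : Fin r), w (Sum.inr (Sum.inl (l, i))) (Sum.inl (m, j)) =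
      0 := by
    rw [hw]; exact fun _ _ _ _ => if_neg fun h => h
  have w6 : ∀ (l : Fin b₂) (i : Fin r) (m : Fin b₂) (j : Fin r), w (Sum.inr (Sum.inl (l, i))) (Sum.inr (Sum.inl (m, j))) =
      if l = m ∧ (j : ℕ) = (i : ℕ) + 1 then (f (Sum.inr (Sum.inl (l, i))) - f (Sum.inr (Sum.inl (m, j)))) ^ 2 else 0 := by
    rw [hw]; exact fun _ _ _ _ => if_congr Iff.rfl rfl rfl
  have w7 : ∀ (l : Fin b₂) (i : Fin r), w (Sum.inr (Sum.inl (l, i))) (Sum.inr (Sum.inr false)) =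
      0 := by
    rw [hw]; exact fun _ _ => if_neg fun h => h
  have w8 : ∀ (l : Fin b₂) (i : Fin r), w (Sum.inr (Sum.inl (l, i))) (Sum.inr (Sum.inr true)) =
      0 := by
    rw [hw]; exact fun _ _ => if_neg fun h => h
  have w9 : ∀ (m : Fin b₁) (j : Fin r), w (Sum.inr (Sum.inr false)) (Sum.inl (m, j)) =
      if (j : ℕ) = 0 then (f (Sum.inr (Sum.inr false)) - f (Sum.inl (m, j))) ^ 2 else 0 := by
    rw [hw]; exact fun _ _ => if_congr Iff.rfl rfl rfl
  have w10 : ∀ (m : Fin b₂) (j : Fin r), w (Sum.inr (Sum.inr false)) (Sum.inr (Sum.inl (m, j))) =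
      0 := by
    rw [hw]; exact fun _ _ => if_neg fun h => h
  have w11 : w (Sum.inr (Sum.inr false)) (Sum.inr (Sum.inr false)) =
      0 := by
    rw [hw]; exact if_neg fun h => h
  have w12 : w (Sum.inr (Sum.inr false)) (Sum.inr (Sum.inr true)) =
      (f (Sum.inr (Sum.inr false)) - f (Sum.inr (Sum.inr true))) ^ 2 := by
    rw [hw]; exact if_pos trivial
  have w13 : ∀ (m : Fin b₁) (j : Fin r), w (Sum.inr (Sum.inr true)) (Sum.inl (m, j)) =
      0 := by
    rw [hw]; exact fun _ _ => if_neg fun h => h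
  have w14 : ∀ (m : Fin b₂) (j : Fin r), w (Sum.inr (Sum.inr true)) (Sum.inr (Sum.inl (m, j))) =
      if (j : ℕ) = 0 then (f (Sum.inr (Sum.inr true)) - f (Sum.inr (Sum.inl (m, j)))) ^ 2 else 0 := by
    rw [hw]; exact fun _ _ => if_congr Iff.rfl rfl rfl
  have w15 : w (Sum.inr (Sum.inr true)) (Sum.inr (Sum.inr false)) =
      0 := by
    rw [hw]; exact if_neg fun h => h
  have w16 : w (Sum.inr (Sum.inr true)) (Sum.inr (Sum.inr true)) =
      0 := by
    rw [hw]; exact if_neg fun h => h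
  simp only [Fintype.sum_sum_type, Fintype.sum_prod_type, Fintype.sum_bool, legE,
    Finset.sum_add_distrib, w1, w2, w3, w4, w5, w6, w7, w8, w9, w10, w11, w12, w13, w14, w15, w16,
    Finset.sum_const_zero, add_zero, zero_add]
  simp only [k1, k2]
  ring

lemma legE_eq {r : ℕ} (a : ℝ) (p : Fin r → ℝ) (q : ℕ → ℝ) (h0 : q 0 = a)
    (hq : ∀ i : Fin r, q (i + 1) = p i) :
    legE a p = ∑ i ∈ Finset.range r, (q (i + 1) - q i) ^ 2 := by
  unfold legE
  rw [Finset.sum_comm, ← Finset.sum_add_distrib, Finset.sum_range]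
  refine Finset.sum_congr rfl fun j _ => ?_
  by_cases hj : (j : ℕ) = 0
  · have : ∀ i : Fin r, ¬ ((j : ℕ) = (i : ℕ) + 1) := by intro i; omega
    rw [Finset.sum_eq_zero (fun i _ => if_neg (this i)), if_pos hj, add_zero]
    rw [← hq j, hj, h0]; ring
  · obtain ⟨⟨j, hjr⟩, rfl⟩ : ∃ j' : Fin r, j = j' := ⟨j, rfl⟩
    obtain _ | j := j
    · simp at hj
    rw [Finset.sum_eq_single (⟨j, by omega⟩ : Fin r)]
    · rw [← hq, ← hq]
      simp; ring
    · intro i _ hi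
      rw [if_neg]
      intro h
      apply hi
      ext
      simp at h ⊢
      omega
    · simp

lemma legE_ge {r : ℕ} (hr : 1 ≤ r) (a : ℝ) (p : Fin r → ℝ) :
    (p ⟨r - 1, by omega⟩ - a) ^ 2 / r ≤ legE a p := by
  let q : ℕ → ℝ := fun n => if n = 0 then a else if h : n - 1 < r then p ⟨n - 1, h⟩ else 0
  rw [legE_eq a p q (by simp [q]) (by intro i; simp [q])]
  have h1 := sq_sum_le_card_mul_sum_sq (s := Finset.range r) (f := fun i => q (i + 1) - q i)
  rw [Finset.sum_range_sub] at h1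
  have h2 : q r = p ⟨r - 1, by omega⟩ := by
    have : r ≠ 0 := by omega
    have h' : r - 1 < r := by omega
    simp only [q, if_neg this, dif_pos h']
  rw [div_le_iff₀ (by positivity), ← h2, mul_comm]
  simpa [q] using h1

lemma legE_lin {r : ℕ} (a d : ℝ) : legE a (fun i : Fin r => a + d * ((i : ℕ) + 1)) = r * d ^ 2 := by
  rw [legE_eq a _ (fun n => a + d * n) (by simp) (by intro i; simp)]
  have : ∀ i : ℕ, (a + d * ((i + 1 : ℕ) : ℝ) - (a + d * i)) ^ 2 = d ^ 2 := by
    intro i; push_cast; ring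
  simp only [this]
  simp

lemma mem_leaves (b₁ b₂ r : ℕ) (hb₁ : 1 ≤ b₁) (hb₂ : 1 ≤ b₂) (hr : 1 ≤ r) (x) :
    x ∈ leavesFinset (crabGraph b₁ b₂ r) ↔
      (∃ l, x = Sum.inl (l, ⟨r - 1, by omega⟩)) ∨
      (∃ l, x = Sum.inr (Sum.inl (l, ⟨r - 1, by omega⟩))) := by
  simp only [leavesFinset, Finset.mem_filter, Finset.mem_univ, true_and]
  rw [SimpleGraph.degree_eq_one_iff_existsUnique_adj]
  simp only [crab_adj]
  rcases x with ⟨l, i, hi⟩ | ⟨l, i, hi⟩ | _ | _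
  · simp only [Sum.inl.injEq, Prod.mk.injEq, Fin.mk.injEq, reduceCtorEq, exists_false, or_false]
    constructor
    · intro h
      refine ⟨l, rfl, ?_⟩
      by_contra hne
      have e1 := fun y₂ => h.unique (y₁ := Sum.inl (l, ⟨i + 1, by omega⟩)) (y₂ := y₂)
        (by simp [crabRel])
      rcases Nat.eq_zero_or_pos i with h0 | h0
      · have := e1 (Sum.inr (Sum.inr false)) (by simp [crabRel, h0])
        simp at this
      · have := e1 (Sum.inl (l, ⟨i - 1, by omega⟩)) (by simp [crabRel]; omega)
        simp at this
        omega
    · rintro ⟨_, _, h⟩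
      rcases Nat.eq_zero_or_pos i with h0 | h0
      · refine ⟨Sum.inr (Sum.inr false), by simp [crabRel, h0], ?_⟩
        rintro (⟨m, j, hj⟩ | ⟨m, j, hj⟩ | _ | _) hy <;> simp [crabRel] at hy ⊢
        omega
      · refine ⟨Sum.inl (l, ⟨i - 1, by omega⟩), by simp [crabRel]; omega, ?_⟩
        rintro (⟨m, j, hj⟩ | ⟨m, j, hj⟩ | _ | _) hy <;> simp [crabRel] at hy ⊢
        · refine ⟨?_, by omega⟩
          rcases hy with hy | hy
          · exact hy.1.symm
          · exact hy.1
        · omega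
  · simp only [Sum.inr.injEq, Sum.inl.injEq, Prod.mk.injEq, Fin.mk.injEq, reduceCtorEq,
      exists_false, false_or]
    constructor
    · intro h
      refine ⟨l, rfl, ?_⟩
      by_contra hne
      have e1 := fun y₂ => h.unique (y₁ := Sum.inr (Sum.inl (l, ⟨i + 1, by omega⟩))) (y₂ := y₂)
        (by simp [crabRel])
      rcases Nat.eq_zero_or_pos i with h0 | h0
      · have := e1 (Sum.inr (Sum.inr true)) (by simp [crabRel, h0])
        simp at this
      · have := e1 (Sum.inr (Sum.inl (l, ⟨i - 1, by omega⟩))) (by simp [crabRel]; omega)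
        simp at this
        omega
    · rintro ⟨_, _, h⟩
      rcases Nat.eq_zero_or_pos i with h0 | h0
      · refine ⟨Sum.inr (Sum.inr true), by simp [crabRel, h0], ?_⟩
        rintro (⟨m, j, hj⟩ | ⟨m, j, hj⟩ | _ | _) hy <;> simp [crabRel] at hy ⊢
        omega
      · refine ⟨Sum.inr (Sum.inl (l, ⟨i - 1, by omega⟩)), by simp [crabRel]; omega, ?_⟩
        rintro (⟨m, j, hj⟩ | ⟨m, j, hj⟩ | _ | _) hy <;> simp [crabRel] at hy ⊢
        · refine ⟨?_, by omega⟩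
          rcases hy with hy | hy
          · exact hy.1.symm
          · exact hy.1
        · omega
  · simp only [reduceCtorEq, exists_false, or_false, Sum.inr.injEq, iff_false]
    intro h
    have := h.unique (y₁ := Sum.inr (Sum.inr true)) (y₂ := Sum.inl (⟨0, hb₁⟩, ⟨0, hr⟩))
      (by simp [crabRel]) (by simp [crabRel])
    simp at this
  · simp only [reduceCtorEq, exists_false, or_false, Sum.inr.injEq, iff_false]
    intro h
    have := h.unique (y₁ := Sum.inr (Sum.inr false)) (y₂ := Sum.inr (Sum.inl (⟨0, hb₂⟩, ⟨0, hr⟩)))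
      (by simp [crabRel]) (by simp [crabRel])
    simp at this

lemma sum_leaves (b₁ b₂ r : ℕ) (hb₁ : 1 ≤ b₁) (hb₂ : 1 ≤ b₂) (hr : 1 ≤ r)
    (g : ((Fin b₁ × Fin r) ⊕ (Fin b₂ × Fin r) ⊕ Bool) → ℝ) :
    ∑ x ∈ leavesFinset (crabGraph b₁ b₂ r), g x =
      ∑ l, g (Sum.inl (l, ⟨r - 1, by omega⟩)) +
      ∑ l, g (Sum.inr (Sum.inl (l, ⟨r - 1, by omega⟩))) := by
  have : leavesFinset (crabGraph b₁ b₂ r) = Finset.univ.filter (fun x =>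
      (∃ l, x = Sum.inl (l, ⟨r - 1, by omega⟩)) ∨
      (∃ l, x = Sum.inr (Sum.inl (l, ⟨r - 1, by omega⟩)))) := by
    ext x
    rw [mem_leaves b₁ b₂ r hb₁ hb₂ hr]
    simp
  rw [this, Finset.sum_filter]
  simp [Fintype.sum_sum_type, Fintype.sum_prod_type]

lemma exists_test {V : Type*} [Fintype V] (B : Finset V) (k m : ℕ) (hm : m < k)
    (F : Submodule ℝ (V → ℝ))
    (hF : Module.finrank ℝ
      (F.map (LinearMap.funLeft ℝ ℝ (fun x : {v // v ∈ B} => (x : V)))) = k)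
    (c : Fin m → V → ℝ) :
    ∃ f ∈ F, (∀ i, ∑ x ∈ B, c i x * f x = 0) ∧ 0 < ∑ x ∈ B, f x ^ 2 := by
  let ψ : ({v // v ∈ B} → ℝ) →ₗ[ℝ] (Fin m → ℝ) :=
    { toFun := fun w i => ∑ x : {v // v ∈ B}, c i x * w x
      map_add' := by
        intro v w; ext i; simp [mul_add, Finset.sum_add_distrib]
      map_smul' := by
        intro a w; ext i; simp only [Pi.smul_apply, smul_eq_mul, RingHom.id_apply, Finset.mul_sum]
        exact Finset.sum_congr rfl fun _ _ => by ring }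
  have h := LinearMap.ker_ne_bot_of_finrank_lt (f := ψ.domRestrict
    (F.map (LinearMap.funLeft ℝ ℝ (fun x : {v // v ∈ B} => (x : V))))) (by rw [hF]; simpa using hm)
  obtain ⟨⟨w, hw⟩, hw1, hw2⟩ := Submodule.exists_mem_ne_zero_of_ne_bot h
  obtain ⟨f, hf, rfl⟩ := hw
  refine ⟨f, hf, ?_, ?_⟩
  · intro i
    have := congrFun (LinearMap.mem_ker.1 hw1) i
    rw [← Finset.sum_coe_sort]
    exact this
  · by_contra hcon
    have h0 : ∑ x ∈ B, f x ^ 2 = 0 :=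
      le_antisymm (not_lt.1 hcon) (Finset.sum_nonneg fun _ _ => sq_nonneg _)
    rw [Finset.sum_eq_zero_iff_of_nonneg (fun _ _ => sq_nonneg _)] at h0
    apply hw2
    ext ⟨x, hx⟩
    simpa [LinearMap.funLeft_apply] using h0 x hx

lemma eig_eq {V : Type*} [Fintype V] (G : SimpleGraph V) (B : Finset V) (k m : ℕ) (hm : m < k)
    (t : ℝ) (c : Fin m → V → ℝ)
    (hlow : ∀ f : V → ℝ, (∀ i, ∑ x ∈ B, c i x * f x = 0) →
      t * ∑ x ∈ B, f x ^ 2 ≤ dirichletEnergy G f)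
    (L : (Fin k → ℝ) →ₗ[ℝ] (V → ℝ))
    (hinj : ∀ a, (∀ x ∈ B, L a x = 0) → a = 0)
    (hup : ∀ a, dirichletEnergy G (L a) ≤ t * ∑ x ∈ B, L a x ^ 2) :
    steklovEig G B k = t := by
  apply IsLeast.csInf_eq
  constructor
  · refine ⟨LinearMap.range L, ?_, ?_⟩
    · rw [← LinearMap.range_comp, LinearMap.finrank_range_of_inj]
      · simp
      · rw [← LinearMap.ker_eq_bot, LinearMap.ker_eq_bot']
        intro a ha
        apply hinj
        intro x hx
        exact congrFun ha ⟨x, hx⟩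
    · rintro _ ⟨a, rfl⟩
      exact hup a
  · rintro s ⟨F, hF, hs⟩
    obtain ⟨f, hf, h1, h2⟩ := exists_test B k m hm F hF c
    exact le_of_mul_le_mul_right ((hlow f h1).trans (hs f hf)) h2

lemma leg_sum_ge {b r : ℕ} (hr : 1 ≤ r) (a : ℝ) (p : Fin b → Fin r → ℝ) :
    ((∑ l, p l ⟨r - 1, by omega⟩ ^ 2) - 2 * a * (∑ l, p l ⟨r - 1, by omega⟩) + b * a ^ 2) / r ≤
      ∑ l, legE a (p l) := by
  refine le_trans (le_of_eq ?_) (Finset.sum_le_sum fun l _ => legE_ge hr a (p l))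
  rw [← Finset.sum_div]
  congr 1
  rw [Finset.mul_sum, ← Finset.sum_sub_distrib]
  have : (b : ℝ) * a ^ 2 = ∑ l : Fin b, a ^ 2 := by simp
  rw [this, ← Finset.sum_add_distrib]
  exact Finset.sum_congr rfl fun _ _ => by ring

lemma legE_nonneg {r : ℕ} (a : ℝ) (p : Fin r → ℝ) : 0 ≤ legE a p := by
  unfold legE
  refine add_nonneg (Finset.sum_nonneg fun _ _ => ?_)
    (Finset.sum_nonneg fun _ _ => Finset.sum_nonneg fun _ _ => ?_) <;> positivity

lemma alg_ge (b₁ b₂ r Q₁ Q₂ s a c E₁ E₂ : ℝ) (h1 : 0 < b₁) (h2 : 0 < b₂) (hr : 0 < r)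
    (hQ₁ : s ^ 2 ≤ b₁ * Q₁) (hQ₂ : s ^ 2 ≤ b₂ * Q₂)
    (hE₁ : (Q₁ - 2 * a * s + b₁ * a ^ 2) / r ≤ E₁)
    (hE₂ : (Q₂ - 2 * c * (-s) + b₂ * c ^ 2) / r ≤ E₂) :
    (b₁ + b₂) / (b₁ * b₂ + r * (b₁ + b₂)) * (Q₁ + Q₂) ≤ (a - c) ^ 2 + E₁ + E₂ := by
  obtain ⟨h, hh⟩ : ∃ h, h = b₁ * b₂ / (b₁ + b₂) := ⟨_, rfl⟩
  have hpos : 0 < h := by rw [hh]; positivity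
  have e1 : (b₁ + b₂) / (b₁ * b₂ + r * (b₁ + b₂)) = 1 / (r + h) := by
    rw [hh]; field_simp; ring
  have e2 : h * (a - c) ^ 2 ≤ b₁ * a ^ 2 + b₂ * c ^ 2 := by
    rw [hh, div_mul_eq_mul_div, div_le_iff₀ (by positivity)]
    nlinarith [sq_nonneg (b₁ * a + b₂ * c)]
  have e3 : s ^ 2 ≤ h * (Q₁ + Q₂) := by
    rw [hh, div_mul_eq_mul_div, le_div_iff₀ (by positivity)]
    nlinarith
  rw [e1]
  have e4 : (Q₁ + Q₂ - 2 * (a - c) * s + h * (a - c) ^ 2) / r ≤ E₁ + E₂ := by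
    refine le_trans ?_ (add_le_add hE₁ hE₂)
    rw [← add_div]
    refine div_le_div_of_nonneg_right ?_ hr.le
    linarith
  have e5 : 1 / (r + h) * (Q₁ + Q₂) ≤
      (a - c) ^ 2 + (Q₁ + Q₂ - 2 * (a - c) * s + h * (a - c) ^ 2) / r := by
    rw [one_div_mul_eq_div, div_le_iff₀ (by positivity)]
    have : ((a - c) ^ 2 + (Q₁ + Q₂ - 2 * (a - c) * s + h * (a - c) ^ 2) / r) * (r + h) =
      (((r + h) * (a - c) - s) ^ 2 + (r + h) * (Q₁ + Q₂) - s ^ 2) / r := by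
      field_simp; ring
    rw [this, le_div_iff₀ hr]
    nlinarith [sq_nonneg ((r + h) * (a - c) - s)]
  linarith

/-- The second eigenfunction. -/
noncomputable def crabEig (b₁ b₂ r : ℕ) :
    ((Fin b₁ × Fin r) ⊕ (Fin b₂ × Fin r) ⊕ Bool) → ℝ
  | Sum.inl (_, i) => b₂ / (b₁ + b₂) + 1 / b₁ * ((i : ℕ) + 1)
  | Sum.inr (Sum.inl (_, i)) => -(b₁ / (b₁ + b₂)) - 1 / b₂ * ((i : ℕ) + 1)
  | Sum.inr (Sum.inr false) => b₂ / (b₁ + b₂)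
  | Sum.inr (Sum.inr true) => -(b₁ / (b₁ + b₂))

/-- Linear extension along legs, vanishing at the centers. -/
noncomputable def crabExt (b₁ b₂ r : ℕ) (A : Fin b₁ ⊕ Fin b₂ → ℝ) :
    ((Fin b₁ × Fin r) ⊕ (Fin b₂ × Fin r) ⊕ Bool) → ℝ
  | Sum.inl (l, i) => A (Sum.inl l) / r * ((i : ℕ) + 1)
  | Sum.inr (Sum.inl (l, i)) => A (Sum.inr l) / r * ((i : ℕ) + 1)
  | Sum.inr (Sum.inr _) => 0

/-- Let `b₁, b₂, r ≥ 1` be integers, and let `T = CG(b₁,b₂,r)` be the crab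
graph with leaves as boundary. Then the Steklov eigenvalues of `T` are `σ₁ = 0`,
`σ₂ = (b₁+b₂)/(b₁b₂ + r(b₁+b₂))`, and `σₖ = 1/r` for all `3 ≤ k ≤ b₁+b₂`. -/
theorem stmt10 (b₁ b₂ r : ℕ) (hb₁ : 1 ≤ b₁) (hb₂ : 1 ≤ b₂) (hr : 1 ≤ r) :
    steklovEig (crabGraph b₁ b₂ r) (leavesFinset (crabGraph b₁ b₂ r)) 1 = 0 ∧
    steklovEig (crabGraph b₁ b₂ r) (leavesFinset (crabGraph b₁ b₂ r)) 2 =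
      ((b₁ : ℝ) + b₂) / ((b₁ : ℝ) * b₂ + r * ((b₁ : ℝ) + b₂)) ∧
    ∀ k : ℕ, 3 ≤ k → k ≤ b₁ + b₂ →
      steklovEig (crabGraph b₁ b₂ r) (leavesFinset (crabGraph b₁ b₂ r)) k = 1 / (r : ℝ) := by
  have hb₁' : (0 : ℝ) < b₁ := by exact_mod_cast hb₁
  have hb₂' : (0 : ℝ) < b₂ := by exact_mod_cast hb₂
  have hr' : (0 : ℝ) < r := by exact_mod_cast hr
  have hrc : (((r - 1 : ℕ) : ℝ)) + 1 = r := by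
    have : r - 1 + 1 = r := by omega
    exact_mod_cast this
  have hl1 : ∀ l : Fin b₁, (Sum.inl (l, ⟨r - 1, by omega⟩) : (Fin b₁ × Fin r) ⊕ (Fin b₂ × Fin r) ⊕ Bool)
      ∈ leavesFinset (crabGraph b₁ b₂ r) := fun l => by
    rw [mem_leaves b₁ b₂ r hb₁ hb₂ hr]; exact Or.inl ⟨l, rfl⟩
  have hl2 : ∀ l : Fin b₂, (Sum.inr (Sum.inl (l, ⟨r - 1, by omega⟩)) : (Fin b₁ × Fin r) ⊕ (Fin b₂ × Fin r) ⊕ Bool)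
      ∈ leavesFinset (crabGraph b₁ b₂ r) := fun l => by
    rw [mem_leaves b₁ b₂ r hb₁ hb₂ hr]; exact Or.inr ⟨l, rfl⟩
  refine ⟨?_, ?_, ?_⟩
  · refine eig_eq _ _ 1 0 (by norm_num) 0 (fun _ _ => 0) ?_
      { toFun := fun a _ => a 0, map_add' := fun _ _ => rfl, map_smul' := fun _ _ => rfl } ?_ ?_
    · intro f _
      rw [zero_mul, energy_eq]
      have h1 := Finset.sum_nonneg (s := Finset.univ) (fun l _ =>
        legE_nonneg (f (Sum.inr (Sum.inr false))) (fun i => f (Sum.inl (l, i))))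
      have h2 := Finset.sum_nonneg (s := Finset.univ) (fun l _ =>
        legE_nonneg (f (Sum.inr (Sum.inr true))) (fun i => f (Sum.inr (Sum.inl (l, i)))))
      positivity
    · intro a ha
      have := ha _ (hl1 ⟨0, hb₁⟩)
      ext i
      fin_cases i
      exact this
    · intro a
      simp [dirichletEnergy]
  · refine eig_eq _ _ 2 1 (by norm_num) _ (fun _ _ => 1) ?_
      { toFun := fun a x => a 0 + a 1 * crabEig b₁ b₂ r x,
        map_add' := fun _ _ => by ext; simp; ring,
        map_smul' := fun _ _ => by ext; simp; ring } ?_ ?_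
    · intro f hf
      have hf := hf 0
      simp only [one_mul] at hf
      rw [sum_leaves b₁ b₂ r hb₁ hb₂ hr] at hf ⊢
      rw [energy_eq]
      have hE₁ := leg_sum_ge hr (f (Sum.inr (Sum.inr false))) (fun l i => f (Sum.inl (l, i)))
      have hE₂ := leg_sum_ge hr (f (Sum.inr (Sum.inr true))) (fun l i => f (Sum.inr (Sum.inl (l, i))))
      have hQ₁ := sq_sum_le_card_mul_sum_sq (s := Finset.univ)
        (f := fun l : Fin b₁ => f (Sum.inl (l, ⟨r - 1, by omega⟩)))
      have hQ₂ := sq_sum_le_card_mul_sum_sq (s := Finset.univ)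
        (f := fun l : Fin b₂ => f (Sum.inr (Sum.inl (l, ⟨r - 1, by omega⟩))))
      simp only [Finset.card_univ, Fintype.card_fin] at hQ₁ hQ₂
      have hs := eq_neg_of_add_eq_zero_right hf
      rw [hs] at hQ₂ hE₂
      rw [neg_sq] at hQ₂
      exact alg_ge _ _ _ _ _ _ _ _ _ _ hb₁' hb₂' hr' hQ₁ hQ₂ hE₁ hE₂
    · intro a ha
      have h1 := ha _ (hl1 ⟨0, hb₁⟩)
      have h2 := ha _ (hl2 ⟨0, hb₂⟩)
      simp only [LinearMap.coe_mk, AddHom.coe_mk, crabEig, hrc] at h1 h2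
      have h3 : a 1 * ((b₂ : ℝ) / (b₁ + b₂) + 1 / b₁ * r + b₁ / (b₁ + b₂) + 1 / b₂ * r) = 0 := by
        linear_combination h1 - h2
      have h4 : a 1 = 0 := by
        rcases mul_eq_zero.1 h3 with h | h
        · exact h
        · have : (0 : ℝ) < (b₂ : ℝ) / (b₁ + b₂) + 1 / b₁ * r + b₁ / (b₁ + b₂) + 1 / b₂ * r := by
            positivity
          linarith
      have h5 : a 0 = 0 := by simpa [h4] using h1
      ext i
      fin_cases i
      · exact h5
      · exact h4
    · intro a
      rw [energy_eq, sum_leaves b₁ b₂ r hb₁ hb₂ hr]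
      simp only [LinearMap.coe_mk, AddHom.coe_mk, crabEig, hrc]
      have e1 : (fun i : Fin r => a 0 + a 1 * ((b₂ : ℝ) / (b₁ + b₂) + 1 / b₁ * ((i : ℕ) + 1))) =
          fun i : Fin r => (a 0 + a 1 * ((b₂ : ℝ) / (b₁ + b₂))) + a 1 / b₁ * ((i : ℕ) + 1) := by
        ext i; ring
      have e2 : (fun i : Fin r => a 0 + a 1 * (-((b₁ : ℝ) / (b₁ + b₂)) - 1 / b₂ * ((i : ℕ) + 1))) =
          fun i : Fin r => (a 0 + a 1 * (-((b₁ : ℝ) / (b₁ + b₂)))) + -(a 1 / b₂) * ((i : ℕ) + 1) := by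
        ext i; ring
      rw [e1, e2, legE_lin, legE_lin]
      simp only [Finset.sum_const, Finset.card_univ, Fintype.card_fin, nsmul_eq_mul]
      generalize a 0 = p
      generalize a 1 = q
      generalize (b₁ : ℝ) = x at *
      generalize (b₂ : ℝ) = y at *
      generalize (r : ℝ) = z at *
      have key : (x + y) / (x * y + z * (x + y)) *
          (x * (p + q * (y / (x + y) + 1 / x * z)) ^ 2 +
            y * (p + q * (-(x / (x + y)) - 1 / y * z)) ^ 2) =
          (x + y) / (x * y + z * (x + y)) * ((x + y) * p ^ 2) +
          ((p + q * (y / (x + y)) - (p + q * -(x / (x + y)))) ^ 2 + x * (z * (q / x) ^ 2) +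
            y * (z * (-(q / y)) ^ 2)) := by
        field_simp
        ring
      rw [key]
      have : 0 ≤ (x + y) / (x * y + z * (x + y)) * ((x + y) * p ^ 2) := by positivity
      linarith
  · intro k hk3 hk
    obtain ⟨e⟩ : Nonempty (Fin k ↪ Fin b₁ ⊕ Fin b₂) :=
      Function.Embedding.nonempty_of_card_le (by simpa using hk)
    refine eig_eq _ _ k 2 (by omega) _
      ![fun x => if x.isLeft then 1 else 0, fun x => if x.isLeft then 0 else 1] ?_
      { toFun := fun a => crabExt b₁ b₂ r (fun s => ∑ j, if e j = s then a j else 0)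
        map_add' := ?_
        map_smul' := ?_ } ?_ ?_
    · intro f hf
      have hf1 := hf 0
      have hf2 := hf 1
      rw [sum_leaves b₁ b₂ r hb₁ hb₂ hr] at hf1 hf2 ⊢
      simp at hf1 hf2
      rw [energy_eq]
      have hE₁ := leg_sum_ge hr (f (Sum.inr (Sum.inr false))) (fun l i => f (Sum.inl (l, i)))
      have hE₂ := leg_sum_ge hr (f (Sum.inr (Sum.inr true))) (fun l i => f (Sum.inr (Sum.inl (l, i))))
      rw [hf1, div_le_iff₀ hr'] at hE₁
      rw [hf2, div_le_iff₀ hr'] at hE₂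
      rw [one_div_mul_eq_div, div_le_iff₀ hr']
      have p1 : 0 ≤ (b₁ : ℝ) * f (Sum.inr (Sum.inr false)) ^ 2 := by positivity
      have p2 : 0 ≤ (b₂ : ℝ) * f (Sum.inr (Sum.inr true)) ^ 2 := by positivity
      have p3 : 0 ≤ (f (Sum.inr (Sum.inr false)) - f (Sum.inr (Sum.inr true))) ^ 2 * r := by
        positivity
      simp only [add_mul]
      linarith
    · intro a b
      ext x
      have : ∀ s, (∑ j, if e j = s then (a + b) j else 0) =
          (∑ j, if e j = s then a j else 0) + ∑ j, if e j = s then b j else 0 := by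
        intro s
        rw [← Finset.sum_add_distrib]
        refine Finset.sum_congr rfl fun j _ => ?_
        split_ifs <;> simp
      simp only [funext this]
      rcases x with ⟨l, i⟩ | ⟨l, i⟩ | _ | _ <;>
        simp only [crabExt, Pi.add_apply, Pi.smul_apply, smul_eq_mul, RingHom.id_apply] <;> ring
    · intro t a
      ext x
      have : ∀ s, (∑ j, if e j = s then (t • a) j else 0) =
          t * (∑ j, if e j = s then a j else 0) := by
        intro s
        rw [Finset.mul_sum]
        refine Finset.sum_congr rfl fun j _ => ?_
        split_ifs <;> simp
      simp only [funext this]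
      rcases x with ⟨l, i⟩ | ⟨l, i⟩ | _ | _ <;>
        simp only [crabExt, Pi.add_apply, Pi.smul_apply, smul_eq_mul, RingHom.id_apply] <;> ring
    · intro a ha
      have hA : ∀ s, (∑ j, if e j = s then a j else 0) = 0 := by
        rintro (l | l)
        · have := ha _ (hl1 l)
          simp only [LinearMap.coe_mk, AddHom.coe_mk, crabExt, hrc] at this
          rwa [div_mul_cancel₀ _ hr'.ne'] at this
        · have := ha _ (hl2 l)
          simp only [LinearMap.coe_mk, AddHom.coe_mk, crabExt, hrc] at this
          rwa [div_mul_cancel₀ _ hr'.ne'] at this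
      ext j
      have := hA (e j)
      simpa using this
    · intro a
      rw [energy_eq, sum_leaves b₁ b₂ r hb₁ hb₂ hr]
      simp only [LinearMap.coe_mk, AddHom.coe_mk]
      generalize (fun s => ∑ j, if e j = s then a j else 0) = A
      have e1 : ∀ d : ℝ, legE 0 (fun i : Fin r => d * ((i : ℕ) + 1)) = r * d ^ 2 := by
        intro d
        simpa using legE_lin (r := r) 0 d
      simp only [crabExt, hrc, e1]
      rw [mul_add, Finset.mul_sum, Finset.mul_sum, sub_self]
      apply le_of_eq
      rw [zero_pow (by norm_num), zero_add]
      congr 1 <;> refine Finset.sum_congr rfl fun l _ => ?_ <;> field_simp
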